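/- Let n ≥ 2. Let U₁, …, U_n be i.i.d. centered Gaussian random variables of variance 1/180 and, independently, let (V_{ij})_{1≤i<j≤n} be i.i.d. centered Gaussian random variables of variance 1/36; set Z_{ij} = U_i + U_j + V_{ij}. For t ∈ ℝ, let G_t be the random labelled graph on {1,…,n} with an edge between i and j exactly when Z_{ij} ≤ t, and let H(t) = −Σ_g P(G_t = g) log₂ P(G_t = g). Then: (i) for every graph g, P(G_0 = g) = P(G_0 = gᶜ), where gᶜ is the complement of g; (ii) the average edge density at t = 0 equals 1/2, i.e. E[|E(G_0)|] = n(n−1)/4; and (iii) H is differentiable at 0 with H′(0) = 0, so t = 0 is a stationary point of the entropy of the limiting hard RGG ensemble in the cube. -/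

import Mathlib

open MeasureTheory ProbabilityTheory

/-- Index type of (unordered) pairs `i < j` of nodes. -/
abbrev Pairs (n : ℕ) := {p : Fin n × Fin n // p.1 < p.2}

/-- The joint law of the independent Gaussians `U₁,…,U_n` (variance `1/180`) and
`(V_{ij})_{i<j}` (variance `1/36`). -/
noncomputable def cubeGaussLaw (n : ℕ) : Measure ((Fin n → ℝ) × (Pairs n → ℝ)) :=
  (Measure.pi fun _ : Fin n => gaussianReal 0 (1/180 : NNReal)).prod
    (Measure.pi fun _ : Pairs n => gaussianReal 0 (1/36 : NNReal))

/-- `Z_{ij} = U_i + U_j + V_{ij}`, the limiting normalised squared distances in the cube. -/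
noncomputable def Zvar (n : ℕ) (ω : (Fin n → ℝ) × (Pairs n → ℝ)) (q : Pairs n) : ℝ :=
  ω.1 q.1.1 + ω.1 q.1.2 + ω.2 q

/-- `P(G_t = g)` for the limiting hard RGG in the cube: edge `(i,j)` present iff `Z_{ij} ≤ t`. -/
noncomputable def limProb (n : ℕ) (t : ℝ) (g : SimpleGraph (Fin n)) : ℝ :=
  (cubeGaussLaw n {ω | ∀ q : Pairs n, (Zvar n ω q ≤ t ↔ g.Adj q.1.1 q.1.2)}).toReal

/-- The Shannon entropy (base 2) of the limiting hard RGG ensemble in the cube. -/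
noncomputable def limEntropy (n : ℕ) (t : ℝ) : ℝ :=
  -∑ g : SimpleGraph (Fin n), limProb n t g * Real.logb 2 (limProb n t g)

/-- One-edge factor. -/
noncomputable def edgeFac (b : Prop) (x : ℝ) : ℝ :=
  (gaussianReal 0 (1/36 : NNReal)).real {v | v ≤ x ↔ b}

lemma var_ne : (1/36 : NNReal) ≠ 0 := by norm_num

lemma edgeFac_true {b : Prop} (hb : b) (x : ℝ) :
    edgeFac b x = (gaussianReal 0 (1/36 : NNReal)).real (Set.Iic x) := by
  unfold edgeFac; congr 1; ext v; simp [hb]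

lemma edgeFac_false {b : Prop} (hb : ¬ b) (x : ℝ) :
    edgeFac b x = (gaussianReal 0 (1/36 : NNReal)).real (Set.Ioi x) := by
  unfold edgeFac; congr 1; ext v; simp [hb]

lemma edgeFac_false' {b : Prop} (hb : ¬ b) (x : ℝ) :
    edgeFac b x = 1 - (gaussianReal 0 (1/36 : NNReal)).real (Set.Iic x) := by
  rw [edgeFac_false hb, ← Set.compl_Iic, probReal_compl_eq_one_sub measurableSet_Iic]

lemma edgeFac_nonneg (b : Prop) (x : ℝ) : 0 ≤ edgeFac b x := measureReal_nonneg

lemma edgeFac_le_one (b : Prop) (x : ℝ) : edgeFac b x ≤ 1 := measureReal_le_one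

lemma edgeFac_pos (b : Prop) (x : ℝ) : 0 < edgeFac b x := by
  have key : ∀ s : Set ℝ, volume s ≠ 0 → 0 < (gaussianReal 0 (1/36 : NNReal)).real s := by
    intro s hs
    rw [measureReal_def, ENNReal.toReal_pos_iff]
    refine ⟨pos_iff_ne_zero.2 fun h => hs (gaussianReal_absolutelyContinuous' 0 var_ne h),
      measure_lt_top _ _⟩
  by_cases hb : b
  · rw [edgeFac_true hb]; exact key _ (by simp)
  · rw [edgeFac_false hb]; exact key _ (by simp)

lemma edgeFac_neg (b : Prop) (x : ℝ) : edgeFac b (-x) = edgeFac (¬ b) x := by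
  have : NullSingletonClass (gaussianReal 0 (1/36 : NNReal)) := nullSingletonClass_gaussianReal var_ne
  have hmap : (gaussianReal 0 (1/36 : NNReal)).map (fun x ↦ -x) = gaussianReal 0 (1/36 : NNReal) := by
    simpa using gaussianReal_map_neg (μ := 0) (v := (1/36 : NNReal))
  have hIic : ∀ y : ℝ, (gaussianReal 0 (1/36 : NNReal)).real (Set.Iic (-y))
      = (gaussianReal 0 (1/36 : NNReal)).real (Set.Ioi y) := by
    intro y
    conv_lhs => rw [← hmap]
    rw [map_measureReal_apply (by fun_prop) measurableSet_Iic]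
    have : (fun x : ℝ ↦ -x) ⁻¹' Set.Iic (-y) = Set.Ici y := by ext; simp
    rw [this]
    exact measureReal_congr Ioi_ae_eq_Ici.symm
  by_cases hb : b
  · rw [edgeFac_true hb, edgeFac_false (not_not.2 hb), hIic]
  · rw [edgeFac_false hb, edgeFac_true hb, ← hIic, neg_neg]

lemma cont_pdf : Continuous (gaussianPDFReal 0 (1/36 : NNReal)) := by
  rw [gaussianPDFReal_def]; fun_prop

open Classical in
/-- Derivative of the one-edge factor. -/
noncomputable def edgeDer (b : Prop) (x : ℝ) : ℝ :=
  if b then gaussianPDFReal 0 (1/36 : NNReal) x else - gaussianPDFReal 0 (1/36 : NNReal) x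

lemma hasDerivAt_Iic (x : ℝ) :
    HasDerivAt (fun x => (gaussianReal 0 (1/36 : NNReal)).real (Set.Iic x))
      (gaussianPDFReal 0 (1/36 : NNReal) x) x := by
  have hI : ∀ y, (gaussianReal 0 (1/36 : NNReal)).real (Set.Iic y)
      = (∫ z in (0:ℝ)..y, gaussianPDFReal 0 (1/36 : NNReal) z)
        + ∫ z in Set.Iic (0:ℝ), gaussianPDFReal 0 (1/36 : NNReal) z := by
    intro y
    rw [← intervalIntegral.integral_Iic_sub_Iic
      (integrable_gaussianPDFReal _ _).integrableOn (integrable_gaussianPDFReal _ _).integrableOn,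
      sub_add_cancel, measureReal_def, gaussianReal_apply_eq_integral _ var_ne,
      ENNReal.toReal_ofReal (integral_nonneg fun _ => gaussianPDFReal_nonneg _ _ _)]
  simp_rw [hI]
  exact (cont_pdf.integral_hasStrictDerivAt 0 x).hasDerivAt.add_const _

lemma edgeFac_hasDerivAt (b : Prop) (x : ℝ) : HasDerivAt (edgeFac b) (edgeDer b x) x := by
  by_cases hb : b
  · have : edgeFac b = _ := funext (edgeFac_true hb)
    rw [this, edgeDer, if_pos hb]; exact hasDerivAt_Iic x
  · have : edgeFac b = _ := funext (edgeFac_false' hb)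
    rw [this, edgeDer, if_neg hb]; exact (hasDerivAt_Iic x).const_sub 1

@[fun_prop]
lemma edgeFac_cont (b : Prop) : Continuous (edgeFac b) :=
  continuous_iff_continuousAt.2 fun x => (edgeFac_hasDerivAt b x).continuousAt

@[fun_prop]
lemma edgeDer_cont (b : Prop) : Continuous (edgeDer b) := by
  unfold edgeDer
  by_cases hb : b
  · simpa [hb] using cont_pdf
  · simp only [hb, if_false]
    exact cont_pdf.neg

lemma edgeDer_bound : ∃ C : ℝ, 0 ≤ C ∧ ∀ b x, |edgeDer b x| ≤ C := by
  refine ⟨(√(2 * Real.pi * (1/36 : NNReal)))⁻¹, by positivity, fun b x => ?_⟩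
  have h : gaussianPDFReal 0 (1/36 : NNReal) x ≤ (√(2 * Real.pi * (1/36 : NNReal)))⁻¹ := by
    rw [gaussianPDFReal]
    refine mul_le_of_le_one_right (by positivity) (Real.exp_le_one_iff.2 ?_)
    rw [neg_div]
    exact neg_nonpos.2 (by positivity)
  have h0 := gaussianPDFReal_nonneg 0 (1/36 : NNReal) x
  unfold edgeDer
  split_ifs
  · rwa [abs_of_nonneg h0]
  · rwa [abs_neg, abs_of_nonneg h0]

/-- Law of the `U`. -/
noncomputable abbrev muU (n : ℕ) : Measure (Fin n → ℝ) :=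
  Measure.pi fun _ : Fin n => gaussianReal 0 (1/180 : NNReal)

lemma meas_event (n : ℕ) (t : ℝ) (g : SimpleGraph (Fin n)) :
    MeasurableSet {ω : (Fin n → ℝ) × (Pairs n → ℝ) |
      ∀ q : Pairs n, (Zvar n ω q ≤ t ↔ g.Adj q.1.1 q.1.2)} := by
  rw [Set.ofPred_forall]
  refine MeasurableSet.iInter fun q => ?_
  have hZ : Measurable fun ω : (Fin n → ℝ) × (Pairs n → ℝ) => Zvar n ω q := by
    unfold Zvar; fun_prop
  exact MeasurableSet.iff (measurableSet_le hZ measurable_const) (MeasurableSet.const _)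

lemma limProb_eq (n : ℕ) (t : ℝ) (g : SimpleGraph (Fin n)) :
    limProb n t g = ∫ u, ∏ q : Pairs n, edgeFac (g.Adj q.1.1 q.1.2) (t - u q.1.1 - u q.1.2) ∂(muU n) := by
  unfold limProb cubeGaussLaw
  rw [Measure.prod_apply (meas_event n t g), ← integral_toReal
    (measurable_measure_prodMk_left (meas_event n t g)).aemeasurable
    (Filter.Eventually.of_forall fun _ => measure_lt_top _ _)]
  refine integral_congr_ae (Filter.Eventually.of_forall fun u => ?_)
  have : Prod.mk u ⁻¹' {ω : (Fin n → ℝ) × (Pairs n → ℝ) |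
      ∀ q : Pairs n, (Zvar n ω q ≤ t ↔ g.Adj q.1.1 q.1.2)} =
      Set.pi Set.univ fun q : Pairs n =>
        {v : ℝ | v ≤ t - u q.1.1 - u q.1.2 ↔ g.Adj q.1.1 q.1.2} := by
    ext v
    simp only [Set.mem_preimage, Set.mem_ofPred_eq, Set.mem_pi, Set.mem_univ, true_imp_iff, Zvar]
    refine forall_congr' fun q => ?_
    rw [show u q.1.1 + u q.1.2 + v q ≤ t ↔ v q ≤ t - u q.1.1 - u q.1.2 by
      constructor <;> intro h <;> linarith]
  simp only [this]
  rw [Measure.pi_pi, ENNReal.toReal_prod]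
  rfl

lemma prod_int (n : ℕ) (t : ℝ) (g : SimpleGraph (Fin n)) :
    Integrable (fun u => ∏ q : Pairs n, edgeFac (g.Adj q.1.1 q.1.2) (t - u q.1.1 - u q.1.2))
      (muU n) := by
  refine Integrable.of_bound (C := 1) (Continuous.aestronglyMeasurable (by fun_prop))
    (Filter.Eventually.of_forall fun u => ?_)
  rw [Real.norm_eq_abs, abs_of_nonneg (Finset.prod_nonneg fun q _ => edgeFac_nonneg _ _)]
  exact Finset.prod_le_one (fun q _ => edgeFac_nonneg _ _) fun q _ => edgeFac_le_one _ _

lemma limProb_pos (n : ℕ) (t : ℝ) (g : SimpleGraph (Fin n)) : 0 < limProb n t g := by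
  rw [limProb_eq]
  have hp : ∀ u : Fin n → ℝ,
      0 < ∏ q : Pairs n, edgeFac (g.Adj q.1.1 q.1.2) (t - u q.1.1 - u q.1.2) :=
    fun u => Finset.prod_pos fun q _ => edgeFac_pos _ _
  rw [integral_pos_iff_support_of_nonneg (fun u => (hp u).le) (prod_int n t g)]
  have : Function.support (fun u : Fin n → ℝ =>
      ∏ q : Pairs n, edgeFac (g.Adj q.1.1 q.1.2) (t - u q.1.1 - u q.1.2)) = Set.univ := by
    ext u; simpa using (hp u).ne'
  rw [this, measure_univ]; exact one_pos

lemma limProb_neg (n : ℕ) (t : ℝ) (g : SimpleGraph (Fin n)) :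
    limProb n (-t) g = limProb n t gᶜ := by
  have hmp : MeasurePreserving (fun x : ℝ => -x) (gaussianReal 0 (1/180 : NNReal))
      (gaussianReal 0 (1/180 : NNReal)) :=
    ⟨by fun_prop, by simpa using gaussianReal_map_neg (μ := 0) (v := (1/180 : NNReal))⟩
  have hpi : MeasurePreserving (fun (u : Fin n → ℝ) => -u) (muU n) (muU n) :=
    measurePreserving_pi (fun _ => gaussianReal 0 (1/180 : NNReal))
      (fun _ => gaussianReal 0 (1/180 : NNReal)) (fun _ => hmp)
  rw [limProb_eq, limProb_eq,
    ← hpi.integral_comp (MeasurableEquiv.neg (Fin n → ℝ)).measurableEmbedding]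
  refine integral_congr_ae (Filter.Eventually.of_forall fun u => ?_)
  refine Finset.prod_congr rfl fun q _ => ?_
  have h1 : -t - (-u) q.1.1 - (-u) q.1.2 = -(t - u q.1.1 - u q.1.2) := by
    simp only [Pi.neg_apply]; ring
  have h2 : (gᶜ.Adj q.1.1 q.1.2) = ¬ g.Adj q.1.1 q.1.2 := by
    simp [SimpleGraph.compl_adj, q.2.ne]
  rw [h1, edgeFac_neg, h2]

lemma limProb_diff (n : ℕ) (t : ℝ) (g : SimpleGraph (Fin n)) :
    DifferentiableAt ℝ (fun t => limProb n t g) t := by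
  classical
  simp_rw [limProb_eq]
  obtain ⟨C, hC0, hC⟩ := edgeDer_bound
  refine (hasDerivAt_integral_of_dominated_loc_of_deriv_le
    (F := fun t u => ∏ q : Pairs n, edgeFac (g.Adj q.1.1 q.1.2) (t - u q.1.1 - u q.1.2))
    (F' := fun t u => ∑ q : Pairs n,
      (∏ r ∈ Finset.univ.erase q, edgeFac (g.Adj r.1.1 r.1.2) (t - u r.1.1 - u r.1.2)) •
        edgeDer (g.Adj q.1.1 q.1.2) (t - u q.1.1 - u q.1.2))
    (bound := fun _ => ∑ q : Pairs n, C) (s := Set.univ) (μ := muU n) (x₀ := t)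
    Filter.univ_mem
    (Filter.Eventually.of_forall fun t => (prod_int n t g).aestronglyMeasurable)
    (prod_int n t g) (Continuous.aestronglyMeasurable (by fun_prop))
    (Filter.Eventually.of_forall fun u x _ => ?_) (integrable_const _)
    (Filter.Eventually.of_forall fun u x _ => ?_)).2.differentiableAt
  · refine (norm_sum_le _ _).trans (Finset.sum_le_sum fun q _ => ?_)
    rw [norm_smul, Real.norm_eq_abs, Real.norm_eq_abs,
      abs_of_nonneg (Finset.prod_nonneg fun q _ => edgeFac_nonneg _ _)]
    have := Finset.prod_le_one (s := Finset.univ.erase q)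
      (f := fun r : Pairs n => edgeFac (g.Adj r.1.1 r.1.2) (x - u r.1.1 - u r.1.2))
      (fun q _ => edgeFac_nonneg _ _) fun q _ => edgeFac_le_one _ _
    exact (mul_le_of_le_one_left (abs_nonneg _) this).trans (hC _ _)
  · refine HasDerivAt.fun_finsetProd fun q _ => ?_
    have h := (edgeFac_hasDerivAt (g.Adj q.1.1 q.1.2) (x - u q.1.1 - u q.1.2)).comp x
      (((hasDerivAt_id x).sub_const (u q.1.1)).sub_const (u q.1.2))
    rw [mul_one] at h
    exact h

lemma limProb_sum (n : ℕ) (t : ℝ) : ∑ g : SimpleGraph (Fin n), limProb n t g = 1 := by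
  let G : (Fin n → ℝ) × (Pairs n → ℝ) → SimpleGraph (Fin n) := fun ω =>
    { Adj := fun i j => (∃ h : i < j, Zvar n ω ⟨(i, j), h⟩ ≤ t) ∨
        (∃ h : j < i, Zvar n ω ⟨(j, i), h⟩ ≤ t)
      symm := ⟨fun i j h => h.symm⟩
      loopless := ⟨fun i h => by simp at h⟩ }
  have hG : ∀ g : SimpleGraph (Fin n), G ⁻¹' {g} =
      {ω | ∀ q : Pairs n, (Zvar n ω q ≤ t ↔ g.Adj q.1.1 q.1.2)} := by
    intro g
    ext ω
    simp only [Set.mem_preimage, Set.mem_singleton_iff, Set.mem_ofPred_eq]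
    constructor
    · rintro rfl ⟨⟨i, j⟩, h⟩
      have h : i < j := h
      simp [G, h, h.not_gt]
    · intro h
      ext i j
      rcases lt_trichotomy i j with hij | hij | hij
      · have := h ⟨(i, j), hij⟩
        simp [G, hij, hij.not_gt, this]
      · subst hij; simp
      · have := h ⟨(j, i), hij⟩
        simp [G, hij, hij.not_gt, this, g.adj_comm]
  have : IsProbabilityMeasure (cubeGaussLaw n) := by unfold cubeGaussLaw; infer_instance
  have h := sum_measure_preimage_singleton (μ := cubeGaussLaw n)
    (Finset.univ : Finset (SimpleGraph (Fin n))) (f := G)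
    (fun g _ => by rw [hG]; exact meas_event n t g)
  unfold limProb
  rw [← ENNReal.toReal_sum (fun _ _ => measure_ne_top _ _)]
  simp_rw [← hG]
  rw [h]; simp

lemma card_edges (n : ℕ) (g : SimpleGraph (Fin n)) :
    (Nat.card g.edgeSet : ℝ) + Nat.card gᶜ.edgeSet = (n : ℝ) * (n - 1) / 2 := by
  classical
  have h1 : Disjoint g.edgeFinset gᶜ.edgeFinset :=
    SimpleGraph.disjoint_edgeFinset.2 disjoint_compl_right
  have h2 : g.edgeFinset ∪ gᶜ.edgeFinset = (⊤ : SimpleGraph (Fin n)).edgeFinset := by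
    ext e
    rw [← SimpleGraph.edgeFinset_sup]
    simp only [SimpleGraph.mem_edgeFinset, sup_compl_eq_top]
  have h3 := Finset.card_union_of_disjoint h1
  rw [h2, SimpleGraph.card_edgeFinset_top_eq_card_choose_two, Fintype.card_fin] at h3
  rw [Nat.card_eq_fintype_card, Nat.card_eq_fintype_card, ← SimpleGraph.edgeFinset_card,
    ← SimpleGraph.edgeFinset_card, ← Nat.cast_choose_two, h3]
  push_cast; rfl

lemma sum_compl (n : ℕ) (f : SimpleGraph (Fin n) → ℝ) : ∑ g, f gᶜ = ∑ g, f g :=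
  Equiv.sum_comp (Function.Involutive.toPerm _ (compl_involutive (α := SimpleGraph (Fin n)))) f

/-- For the `d → ∞` limiting hard RGG ensemble in the cube at `t = 0`:
(i) each graph and its complement are equiprobable; (ii) the expected number of edges is
`n(n−1)/4` (average edge density `1/2`); (iii) the entropy is differentiable at `0` with
derivative `0`, so `t = 0` is a stationary point. -/
theorem stmt_19 (n : ℕ) (hn : 2 ≤ n) :
    (∀ g : SimpleGraph (Fin n), limProb n 0 g = limProb n 0 gᶜ) ∧
    (∑ g : SimpleGraph (Fin n), (Nat.card g.edgeSet : ℝ) * limProb n 0 g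
      = (n : ℝ) * ((n : ℝ) - 1) / 4) ∧
    HasDerivAt (fun t : ℝ => limEntropy n t) 0 0 := by
  have hi : ∀ g : SimpleGraph (Fin n), limProb n 0 g = limProb n 0 gᶜ := fun g => by
    simpa using limProb_neg n 0 g
  refine ⟨hi, ?_, ?_⟩
  · have h1 := sum_compl n (fun g => (Nat.card g.edgeSet : ℝ) * limProb n 0 g)
    simp_rw [← hi] at h1
    have h2 : ∑ g : SimpleGraph (Fin n), ((Nat.card g.edgeSet : ℝ) + Nat.card gᶜ.edgeSet)
        * limProb n 0 g = (n : ℝ) * (n - 1) / 2 := by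
      simp_rw [card_edges]
      rw [← Finset.mul_sum, limProb_sum, mul_one]
    simp_rw [add_mul] at h2
    rw [Finset.sum_add_distrib, h1] at h2
    linarith
  · have heven : ∀ t, limEntropy n (-t) = limEntropy n t := by
      intro t
      unfold limEntropy
      simp_rw [limProb_neg]
      rw [sum_compl n (fun g => limProb n t g * Real.logb 2 (limProb n t g))]
    have hd : DifferentiableAt ℝ (limEntropy n) 0 := by
      unfold limEntropy
      refine DifferentiableAt.fun_neg (DifferentiableAt.fun_sum fun g _ => ?_)
      refine (limProb_diff n 0 g).fun_mul ?_
      unfold Real.logb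
      exact ((limProb_diff n 0 g).log (limProb_pos n 0 g).ne').div_const _
    have h1 : HasDerivAt (limEntropy n) (deriv (limEntropy n) 0) 0 := hd.hasDerivAt
    have h2 : HasDerivAt (fun t => limEntropy n (-t)) (deriv (limEntropy n) 0 * -1) 0 := by
      have h1' : HasDerivAt (limEntropy n) (deriv (limEntropy n) 0) (-0) := by simpa using h1
      exact h1'.comp (0:ℝ) (hasDerivAt_neg (0:ℝ))
    simp_rw [heven] at h2
    have := h1.unique h2
    have h0 : deriv (limEntropy n) 0 = 0 := by linarith
    rwa [h0] at h1
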